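/- Let n ≥ 3 and let A = (a_{rs}) ∈ ℂ^{n×n} satisfy Re(Σ_{r,s} a_{rs}ξ_rξ_s) > 0 for all ξ ∈ ℝⁿ∖{0}, and let A_sym := (A + Aᵀ)/2. Then A_sym is invertible, for every x ∈ ℝⁿ∖{0} the number ⟨A_sym^{-1}x, x⟩ lies in ℂ∖(-∞,0], and there exists d ∈ ℂ with d² = det(A_sym) such that the function E(x) := -((n-2)ω_{n-1}d)^{-1} ⟨A_sym^{-1}x,x⟩^{(2-n)/2} (principal branch power) is a fundamental solution of L = Σ_{r,s} a_{rs}∂_r∂_s with pole at the origin: for every φ ∈ C_c^∞(ℝⁿ;ℂ) one has ∫_{ℝⁿ} E(x) Σ_{r,s} a_{rs} (∂_r∂_s φ)(x) dx = φ(0). -/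

import Mathlib

open MeasureTheory Filter Metric Real
open scoped ENNReal NNReal Topology

noncomputable section

/-- The point `(x', t)` of `ℝⁿ`, where `x' ∈ ℝ^{n-1}` and `t ∈ ℝ` is the last coordinate. -/
def toUp {n : ℕ} (x' : EuclideanSpace ℝ (Fin (n - 1))) (t : ℝ) :
    EuclideanSpace ℝ (Fin n) :=
  (WithLp.equiv 2 (Fin n → ℝ)).symm
    (fun i => if h : (i : ℕ) < n - 1 then x' ⟨i, h⟩ else t)

/-- The first `n-1` coordinates of a point of `ℝⁿ`. -/
def xinit {n : ℕ} (x : EuclideanSpace ℝ (Fin n)) : EuclideanSpace ℝ (Fin (n - 1)) :=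
  (WithLp.equiv 2 (Fin (n - 1) → ℝ)).symm
    (fun i => x ⟨(i : ℕ), Nat.lt_of_lt_of_le i.isLt (Nat.sub_le n 1)⟩)

/-- The last coordinate of a point of `ℝⁿ`. -/
def xlast {n : ℕ} (x : EuclideanSpace ℝ (Fin n)) : ℝ :=
  if h : 0 < n then x ⟨n - 1, by omega⟩ else 0

/-- The upper half space `ℝⁿ₊`. -/
def upperHalfSpace (n : ℕ) : Set (EuclideanSpace ℝ (Fin n)) := {x | 0 < xlast x}

/-- The embedding `Fin (n-1) → Fin n`. -/
def finUp {n : ℕ} (i : Fin (n - 1)) : Fin n :=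
  ⟨(i : ℕ), Nat.lt_of_lt_of_le i.isLt (Nat.sub_le n 1)⟩

/-- The last index of `Fin n`. -/
def lastIdx (n : ℕ) (h : 0 < n) : Fin n := ⟨n - 1, by omega⟩

/-- Partial derivative along the `i`-th coordinate direction. -/
def pd {n : ℕ} {F : Type*} [NormedAddCommGroup F] [NormedSpace ℝ F]
    (i : Fin n) (u : EuclideanSpace ℝ (Fin n) → F) (x : EuclideanSpace ℝ (Fin n)) : F :=
  fderiv ℝ u x (EuclideanSpace.single i 1)

/-- Iterated mixed partial derivative along the string of coordinate directions `d`. -/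
def mpd {n : ℕ} {F : Type*} [NormedAddCommGroup F] [NormedSpace ℝ F]
    (k : ℕ) (d : Fin k → Fin n) (u : EuclideanSpace ℝ (Fin n) → F)
    (x : EuclideanSpace ℝ (Fin n)) : F :=
  iteratedFDeriv ℝ k u x (fun i => EuclideanSpace.single (d i) 1)

/-- The nontangential approach filter for the cone `Γ_κ(x')` (points written as `(y', t)`). -/
def ntFilter {n : ℕ} (κ : ℝ) (x' : EuclideanSpace ℝ (Fin (n - 1))) :
    Filter ((EuclideanSpace ℝ (Fin (n - 1))) × ℝ) :=
  (nhds (x', (0 : ℝ))) ⊓ Filter.principal {q | 0 < q.2 ∧ dist x' q.1 < κ * q.2}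

/-- The nontangential maximal function (aperture `κ`) of `u : ℝⁿ → F`,
as an `ℝ≥0∞`-valued function on `ℝ^{n-1}`. -/
def ntMax {n : ℕ} {F : Type*} [NormedAddCommGroup F] (κ : ℝ)
    (u : EuclideanSpace ℝ (Fin n) → F) (x' : EuclideanSpace ℝ (Fin (n - 1))) : ℝ≥0∞ :=
  ⨆ (y' : EuclideanSpace ℝ (Fin (n - 1))) (t : ℝ) (_ : 0 < t ∧ dist x' y' < κ * t),
    (‖u (toUp y' t)‖₊ : ℝ≥0∞)

/-- The `L^p` norm (`p ∈ (0,∞]`) of an `ℝ≥0∞`-valued function on `ℝ^m`. -/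
def lpNormE {m : ℕ} (g : EuclideanSpace ℝ (Fin m) → ℝ≥0∞) (p : ℝ≥0∞) : ℝ≥0∞ :=
  if p = ∞ then essSup g volume
  else (∫⁻ x', (g x') ^ p.toReal) ^ (1 / p.toReal)

/-- The Hardy–Littlewood maximal function. -/
def hlMax {m : ℕ} {F : Type*} [NormedAddCommGroup F]
    (f : EuclideanSpace ℝ (Fin m) → F) (x' : EuclideanSpace ℝ (Fin m)) : ℝ≥0∞ :=
  ⨆ (r : ℝ) (_ : 0 < r),
    (volume (ball x' r))⁻¹ * ∫⁻ y' in ball x' r, (‖f y'‖₊ : ℝ≥0∞)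

/-- The Legendre-Hadamard ellipticity condition for the coefficient tensor `A`,
where `A r s α β` stands for `a^{αβ}_{rs}`. -/
def LegendreHadamard {n M : ℕ} (A : Fin n → Fin n → Fin M → Fin M → ℂ) : Prop :=
  ∃ κ₀ : ℝ, 0 < κ₀ ∧ ∀ (ξ : Fin n → ℝ) (η : Fin M → ℂ),
    κ₀ * (∑ r, ξ r ^ 2) * (∑ a, ‖η a‖ ^ 2) ≤
      (∑ r, ∑ s, ∑ a, ∑ b, A r s a b * ξ r * ξ s * (starRingEnd ℂ) (η a) * η b).re

/-- `g` is the weak (distributional) mixed partial derivative of `f` of order `k`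
along the string of directions `d`. -/
def IsWeakDeriv {m : ℕ} {F : Type*} [NormedAddCommGroup F] [NormedSpace ℝ F]
    (k : ℕ) (d : Fin k → Fin m) (f g : EuclideanSpace ℝ (Fin m) → F) : Prop :=
  ∀ φ : EuclideanSpace ℝ (Fin m) → ℝ, ContDiff ℝ (⊤ : ℕ∞) φ → HasCompactSupport φ →
    ∫ x', (mpd k d φ x') • f x' = ((-1 : ℝ) ^ k) • ∫ x', φ x' • g x'

/-- The surface area `ω_{n-1}` of the unit sphere `S^{n-1}` in `ℝⁿ`. -/
def sphereArea (n : ℕ) : ℝ :=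
  (n : ℝ) * (volume (ball (0 : EuclideanSpace ℝ (Fin n)) (1 : ℝ))).toReal

/-- The parabolic dilation `F_t(x') = t^{1-n} F(x'/t)` of a matrix-valued kernel. -/
def matDil {n M : ℕ} (P : EuclideanSpace ℝ (Fin (n - 1)) → Matrix (Fin M) (Fin M) ℂ)
    (t : ℝ) (x' : EuclideanSpace ℝ (Fin (n - 1))) : Matrix (Fin M) (Fin M) ℂ :=
  (t ^ ((1 : ℤ) - (n : ℤ))) • P (t⁻¹ • x')

/-- The convolution `(P_t * f)(x')` of a dilated matrix kernel with a `ℂ^M`-valued function. -/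
def matConv {n M : ℕ} (P : EuclideanSpace ℝ (Fin (n - 1)) → Matrix (Fin M) (Fin M) ℂ)
    (f : EuclideanSpace ℝ (Fin (n - 1)) → EuclideanSpace ℂ (Fin M))
    (t : ℝ) (x' : EuclideanSpace ℝ (Fin (n - 1))) : EuclideanSpace ℂ (Fin M) :=
  (WithLp.equiv 2 (Fin M → ℂ)).symm
    (fun γ => ∫ y', ∑ α, matDil P t (x' - y') γ α * f y' α)

/-!
With `q x = ⟨A_sym⁻¹ x, x⟩` and `a = n / 2 - 1`, the power in `E` is a Mellin transform of
Gaussians, `Γ(a) q ^ (-a) = ∫₀^∞ t ^ (a - 1) exp (-t q) dt`. Since `Aᵀ` also has symmetric part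
`A_sym`, `Lᵀ exp (-t q) = (4 t² q - 2 n t) exp (-t q)`, hence after integration by parts
`t ^ (a - 1) ∫ exp (-t q) L φ` is the derivative in `t` of `-4 t ^ (n / 2) ∫ exp (-t q) φ`. The
latter vanishes at `t = 0` and, by rescaling `x`, tends to `-4 φ(0) ∫ exp (-q)` as `t → ∞`.
Diagonalizing the real and imaginary parts of `A_sym` by one real congruence shows that
`d = π ^ (-n / 2) ∫ exp (-q)` squares to `det A_sym`, and `(n - 2) ω_{n-1} Γ(a) = 4 π ^ (n / 2)`
matches the constants.
-/

section LinearAlgebra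

open scoped Matrix MatrixOrder Matrix.Norms.L2Operator

variable {ι : Type*}

/-- The symmetric part `(A + Aᵀ) / 2` of a matrix. -/
def symmPart (A : Matrix ι ι ℂ) : Matrix ι ι ℂ := ((1 : ℂ) / 2) • (A + A.transpose)

theorem symmPart_isSymm (A : Matrix ι ι ℂ) : (symmPart A).IsSymm := by
  simp [Matrix.IsSymm, symmPart, add_comm]

theorem symmPart_transpose (A : Matrix ι ι ℂ) : symmPart Aᵀ = symmPart A := by
  simp [symmPart, add_comm]

variable [Fintype ι]

/-- The quadratic form `x ↦ ⟨C x, x⟩` of a complex matrix on real Euclidean space. -/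
def quadForm (C : Matrix ι ι ℂ) (x : EuclideanSpace ℝ ι) : ℂ :=
  ∑ r, ∑ s, C r s * (x r : ℂ) * (x s : ℂ)

/-- The inclusion of `ℝⁿ` into `ℂⁿ`. -/
def complexify (x : EuclideanSpace ℝ ι) : ι → ℂ := fun i => (x i : ℂ)

/-- Ellipticity of the constant coefficient operator with coefficient matrix `C`: the quadratic form
has positive real part away from the origin. -/
def IsElliptic (C : Matrix ι ι ℂ) : Prop :=
  ∀ ξ : EuclideanSpace ℝ ι, ξ ≠ 0 → 0 < (quadForm C ξ).re

theorem quadForm_eq_dotProduct (C : Matrix ι ι ℂ) (x : EuclideanSpace ℝ ι) :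
    quadForm C x = complexify x ⬝ᵥ C *ᵥ complexify x := by
  simp only [quadForm, complexify, dotProduct, Matrix.mulVec, Finset.mul_sum]
  exact Finset.sum_congr rfl fun r _ => Finset.sum_congr rfl fun s _ => by ring

theorem quadForm_smul (C : Matrix ι ι ℂ) (a : ℝ) (x : EuclideanSpace ℝ ι) :
    quadForm C (a • x) = a ^ 2 * quadForm C x := by
  simp only [quadForm, Finset.mul_sum, PiLp.smul_apply, smul_eq_mul, Complex.ofReal_mul]
  exact Finset.sum_congr rfl fun r _ => Finset.sum_congr rfl fun s _ => by ring

theorem contDiff_quadForm (C : Matrix ι ι ℂ) {m : WithTop ℕ∞} : ContDiff ℝ m (quadForm C) := by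
  have hcoord : ∀ i, ContDiff ℝ m fun x : EuclideanSpace ℝ ι => (x i : ℂ) := fun i =>
    Complex.ofRealCLM.contDiff.comp (contDiff_piLp_apply (p := 2))
  unfold quadForm
  fun_prop

theorem dotProduct_symmPart_mulVec (A : Matrix ι ι ℂ) (y : ι → ℂ) :
    y ⬝ᵥ symmPart A *ᵥ y = y ⬝ᵥ A *ᵥ y := by
  have htranspose : y ⬝ᵥ Aᵀ *ᵥ y = y ⬝ᵥ A *ᵥ y := by
    rw [Matrix.dotProduct_transpose_mulVec]
  rw [symmPart, Matrix.smul_mulVec, Matrix.add_mulVec, dotProduct_smul, dotProduct_add, htranspose,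
    smul_eq_mul]
  ring

theorem trace_symmPart_mul (A : Matrix ι ι ℂ) {C : Matrix ι ι ℂ} (hC : C.IsSymm) :
    (symmPart A * C).trace = (A * C).trace := by
  have htranspose : (Aᵀ * C).trace = (A * C).trace := by
    rw [← Matrix.trace_transpose, Matrix.transpose_mul, Matrix.transpose_transpose, hC.eq,
      Matrix.trace_mul_comm]
  rw [symmPart, Matrix.smul_mul, Matrix.add_mul, Matrix.trace_smul, Matrix.trace_add, htranspose,
    smul_eq_mul]
  ring

theorem quadForm_symmPart (A : Matrix ι ι ℂ) : quadForm (symmPart A) = quadForm A := by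
  funext x
  rw [quadForm_eq_dotProduct, quadForm_eq_dotProduct, dotProduct_symmPart_mulVec]

theorem IsElliptic.symmPart {A : Matrix ι ι ℂ} (hA : IsElliptic A) : IsElliptic (symmPart A) := by
  rwa [IsElliptic, quadForm_symmPart]

theorem sq_integral_cexp_neg_sum_mul_sq_mul_prod {d : ι → ℂ} (hd : ∀ i, 0 < (d i).re) :
    (∫ y : ι → ℝ, Complex.exp (-∑ i, d i * (y i : ℂ) ^ 2)) ^ 2 * ∏ i, d i =
      (π : ℂ) ^ Fintype.card ι := by
  have hgauss := GaussianFourier.integral_cexp_neg_sum_mul_add hd 0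
  simp only [Pi.zero_apply, zero_mul, Finset.sum_const_zero, add_zero, ne_eq, OfNat.ofNat_ne_zero,
    not_false_eq_true, zero_pow, zero_div, Complex.exp_zero, mul_one] at hgauss
  rw [hgauss, ← Finset.prod_pow, ← Finset.prod_mul_distrib, ← Finset.card_univ,
    ← Finset.prod_const]
  refine Finset.prod_congr rfl fun i _ => ?_
  rw [← Complex.cpow_nat_mul, Nat.cast_ofNat, mul_one_div_cancel two_ne_zero, Complex.cpow_one,
    div_mul_cancel₀ _ (Complex.ne_zero_of_re_pos (hd i))]

variable [DecidableEq ι]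

theorem exists_orthogonal_diagonalization {M : Matrix ι ι ℝ} (hM : M.IsSymm) :
    ∃ (V : Matrix ι ι ℝ) (l : ι → ℝ), V * Vᵀ = 1 ∧ M = V * Matrix.diagonal l * Vᵀ := by
  have hherm : M.IsHermitian := by
    rwa [Matrix.IsHermitian, Matrix.conjTranspose_eq_transpose_of_trivial]
  refine ⟨hherm.eigenvectorUnitary, hherm.eigenvalues, ?_, ?_⟩
  · simpa [Matrix.star_eq_conjTranspose] using
      Unitary.coe_mul_star_self hherm.eigenvectorUnitary
  · simpa [Unitary.conjStarAlgAut_apply, Matrix.star_eq_conjTranspose, Function.comp_def]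
      using hherm.spectral_theorem

theorem exists_simultaneous_diagonalization {R S : Matrix ι ι ℝ} (hR : R.PosDef) (hS : S.IsSymm) :
    ∃ (Q : Matrix ι ι ℝ) (l : ι → ℝ),
      IsUnit Q.det ∧ R = Qᵀ * Q ∧ S = Qᵀ * Matrix.diagonal l * Q := by
  obtain ⟨B, hB, rfl⟩ : ∃ B : Matrix ι ι ℝ, IsUnit B ∧ R = Bᵀ * B := by
    simpa only [Matrix.star_eq_conjTranspose, Matrix.conjTranspose_eq_transpose_of_trivial] using
      CStarAlgebra.isStrictlyPositive_iff_eq_star_mul_self.mp hR.isStrictlyPositive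
  have hBdet : IsUnit B.det := (Matrix.isUnit_iff_isUnit_det B).mp hB
  have hsymm : (B⁻¹ᵀ * S * B⁻¹).IsSymm := by
    simp only [Matrix.IsSymm, Matrix.transpose_mul, Matrix.transpose_transpose, hS.eq,
      Matrix.mul_assoc]
  obtain ⟨V, l, hV, hspectral⟩ := exists_orthogonal_diagonalization hsymm
  refine ⟨Vᵀ * B, l, ?_, ?_, ?_⟩
  · rw [Matrix.det_mul]
    refine IsUnit.mul (IsUnit.of_mul_eq_one V.det ?_) hBdet
    rw [mul_comm, ← Matrix.det_mul, hV, Matrix.det_one]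
  · rw [Matrix.transpose_mul, Matrix.transpose_transpose, Matrix.mul_assoc, ← Matrix.mul_assoc V,
      hV, Matrix.one_mul]
  · calc S = Bᵀ * (B⁻¹ᵀ * S * B⁻¹) * B := by
          rw [Matrix.transpose_nonsing_inv, Matrix.mul_assoc, Matrix.mul_assoc, Matrix.mul_assoc,
            Matrix.nonsing_inv_mul _ hBdet, Matrix.mul_one, ← Matrix.mul_assoc,
            Matrix.mul_nonsing_inv _ (by rwa [Matrix.det_transpose]), Matrix.one_mul]
      _ = (Vᵀ * B)ᵀ * Matrix.diagonal l * (Vᵀ * B) := by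
          rw [hspectral, Matrix.transpose_mul, Matrix.transpose_transpose]
          simp only [Matrix.mul_assoc]

/-- The complex symmetric matrix `Qᵀ diag(d) Q`, with `Q` real and `d` complex. -/
def realCongruence (Q : Matrix ι ι ℝ) (d : ι → ℂ) : Matrix ι ι ℂ :=
  (Q.map Complex.ofRealHom)ᵀ * Matrix.diagonal d * Q.map Complex.ofRealHom

theorem det_map_ofReal (Q : Matrix ι ι ℝ) : (Q.map Complex.ofRealHom).det = (Q.det : ℂ) :=
  (RingHom.map_det Complex.ofRealHom Q).symm

theorem det_realCongruence (Q : Matrix ι ι ℝ) (d : ι → ℂ) :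
    (realCongruence Q d).det = (Q.det : ℂ) ^ 2 * ∏ i, d i := by
  rw [realCongruence, Matrix.det_mul, Matrix.det_mul, Matrix.det_transpose, Matrix.det_diagonal,
    det_map_ofReal]
  ring

theorem inv_realCongruence {Q : Matrix ι ι ℝ} (hQ : IsUnit Q.det) {d : ι → ℂ}
    (hd : ∀ i, d i ≠ 0) : (realCongruence Q d)⁻¹ = realCongruence Q⁻¹ᵀ (fun i => (d i)⁻¹) := by
  have hinv : Q.map Complex.ofRealHom * Q⁻¹.map Complex.ofRealHom = 1 := by
    rw [← Matrix.map_mul, Matrix.mul_nonsing_inv _ hQ, Matrix.map_one _ (map_zero _) (map_one _)]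
  have hdiag : Matrix.diagonal d * Matrix.diagonal (fun i => (d i)⁻¹) = 1 := by
    simp [Matrix.diagonal_mul_diagonal, hd]
  have hinv' : (Q.map Complex.ofRealHom)ᵀ * (Q⁻¹.map Complex.ofRealHom)ᵀ = 1 := by
    rw [← Matrix.transpose_mul, mul_eq_one_comm.mp hinv, Matrix.transpose_one]
  refine Matrix.inv_eq_right_inv ?_
  rw [realCongruence, realCongruence, Matrix.transpose_map, Matrix.transpose_transpose]
  simp only [Matrix.mul_assoc]
  rw [← Matrix.mul_assoc _ (Q⁻¹.map _), hinv, Matrix.one_mul,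
    ← Matrix.mul_assoc (Matrix.diagonal d), hdiag, Matrix.one_mul, hinv']

theorem quadForm_realCongruence (Q : Matrix ι ι ℝ) (d : ι → ℂ) (x : EuclideanSpace ℝ ι) :
    quadForm (realCongruence Q d) x = ∑ i, d i * ((Q *ᵥ x) i : ℂ) ^ 2 := by
  have hQ : Q.map Complex.ofRealHom *ᵥ complexify x = fun i => ((Q *ᵥ x) i : ℂ) := by
    funext i
    simp [Matrix.mulVec, dotProduct, complexify]
  rw [quadForm_eq_dotProduct, realCongruence, ← Matrix.mulVec_mulVec, ← Matrix.mulVec_mulVec,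
    Matrix.dotProduct_mulVec, Matrix.vecMul_transpose, hQ]
  simp only [dotProduct, Matrix.mulVec_diagonal]
  exact Finset.sum_congr rfl fun i _ => by ring

theorem isElliptic_realCongruence {Q : Matrix ι ι ℝ} (hQ : IsUnit Q.det) {d : ι → ℂ}
    (hd : ∀ i, 0 < (d i).re) : IsElliptic (realCongruence Q d) := by
  intro x hx
  have hre : ∀ i, (d i * ((Q *ᵥ x) i : ℂ) ^ 2).re = (d i).re * (Q *ᵥ x) i ^ 2 := fun i => by
    rw [← Complex.ofReal_pow, Complex.re_mul_ofReal]
  have hQx : Q *ᵥ x ≠ 0 := fun h => hx <| (WithLp.ofLp_eq_zero 2).mp <|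
    Matrix.mulVec_injective_of_isUnit ((Matrix.isUnit_iff_isUnit_det Q).mpr hQ)
      (h.trans (Matrix.mulVec_zero Q).symm)
  obtain ⟨i, hi⟩ := Function.ne_iff.mp hQx
  rw [quadForm_realCongruence, Complex.re_sum, Finset.sum_congr rfl fun i _ => hre i]
  exact Finset.sum_pos' (fun j _ => mul_nonneg (hd j).le (sq_nonneg _))
    ⟨i, Finset.mem_univ i, mul_pos (hd i) (pow_two_pos_of_ne_zero hi)⟩

theorem IsElliptic.exists_eq_realCongruence {C : Matrix ι ι ℂ} (hC : IsElliptic C)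
    (hsymm : C.IsSymm) :
    ∃ (Q : Matrix ι ι ℝ) (d : ι → ℂ),
      IsUnit Q.det ∧ (∀ i, 0 < (d i).re) ∧ C = realCongruence Q d := by
  have hre : (C.map Complex.re).PosDef := by
    refine Matrix.PosDef.of_dotProduct_mulVec_pos
      (congr_arg (Matrix.map · Complex.re) hsymm.eq) fun x hx => ?_
    refine (hC (WithLp.toLp 2 x) ((WithLp.toLp_eq_zero 2).not.mpr hx)).trans_eq ?_
    simp only [quadForm, Complex.re_sum, Complex.re_mul_ofReal, dotProduct, Matrix.mulVec,
      Matrix.map_apply, Finset.mul_sum, star_trivial]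
    exact Finset.sum_congr rfl fun r _ => Finset.sum_congr rfl fun s _ => by ring
  have him : (C.map Complex.im).IsSymm := congr_arg (Matrix.map · Complex.im) hsymm.eq
  obtain ⟨Q, l, hQ, hR, hS⟩ := exists_simultaneous_diagonalization hre him
  refine ⟨Q, fun i => 1 + l i * Complex.I, hQ, by simp, ?_⟩
  calc C = (C.map Complex.re).map Complex.ofRealHom +
        Complex.I • (C.map Complex.im).map Complex.ofRealHom := by
        ext i j
        simp [mul_comm Complex.I, Complex.re_add_im]
    _ = (Q.map Complex.ofRealHom)ᵀ *
          (1 + Complex.I • (Matrix.diagonal l).map Complex.ofRealHom) *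
          Q.map Complex.ofRealHom := by
        rw [hR, hS]
        simp only [Matrix.map_mul, Matrix.transpose_map, Matrix.mul_add, Matrix.add_mul,
          Matrix.mul_one, Matrix.mul_smul, Matrix.smul_mul]
    _ = realCongruence Q fun i => 1 + l i * Complex.I := by
        rw [realCongruence, Matrix.diagonal_map (map_zero _), ← Matrix.diagonal_one,
          ← Matrix.diagonal_smul, Matrix.diagonal_add]
        simp [mul_comm Complex.I]

theorem IsElliptic.isUnit {C : Matrix ι ι ℂ} (hC : IsElliptic C) (hsymm : C.IsSymm) :
    IsUnit C := by
  obtain ⟨Q, d, hQ, hd, rfl⟩ := hC.exists_eq_realCongruence hsymm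
  rw [Matrix.isUnit_iff_isUnit_det, det_realCongruence, isUnit_iff_ne_zero]
  have hQ0 : (Q.det : ℂ) ≠ 0 := Complex.ofReal_ne_zero.mpr hQ.ne_zero
  exact mul_ne_zero (pow_ne_zero 2 hQ0)
    (Finset.prod_ne_zero_iff.mpr fun i _ => Complex.ne_zero_of_re_pos (hd i))

theorem IsElliptic.inv {C : Matrix ι ι ℂ} (hC : IsElliptic C) (hsymm : C.IsSymm) :
    IsElliptic C⁻¹ := by
  obtain ⟨Q, d, hQ, hd, rfl⟩ := hC.exists_eq_realCongruence hsymm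
  rw [inv_realCongruence hQ fun i => Complex.ne_zero_of_re_pos (hd i)]
  refine isElliptic_realCongruence ?_ fun i => ?_
  · rw [Matrix.det_transpose]
    exact Matrix.isUnit_nonsing_inv_det Q hQ
  · rw [Complex.inv_re]
    exact div_pos (hd i) (Complex.normSq_pos.mpr (Complex.ne_zero_of_re_pos (hd i)))

theorem integral_comp_mulVec {E : Type*} [NormedAddCommGroup E] [NormedSpace ℝ E]
    {Q : Matrix ι ι ℝ} (hQ : IsUnit Q.det) (f : (ι → ℝ) → E) :
    ∫ x, f (Q *ᵥ x) = |Q.det⁻¹| • ∫ y, f y := by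
  have hemb : MeasurableEmbedding (Matrix.toLin' Q) :=
    (Matrix.toLinearEquiv' Q (Q.invertibleOfIsUnitDet hQ)).toContinuousLinearEquiv.toHomeomorph
      |>.measurableEmbedding
  calc ∫ x, f (Q *ᵥ x) = ∫ y, f y ∂(volume.map (Matrix.toLin' Q)) := (hemb.integral_map f).symm
    _ = |Q.det⁻¹| • ∫ y, f y := by
      rw [Real.map_matrix_volume_pi_eq_smul_volume_pi hQ.ne_zero, integral_smul_measure,
        ENNReal.toReal_ofReal (abs_nonneg _)]

theorem IsElliptic.sq_integral_cexp_neg_quadForm_mul_det {C : Matrix ι ι ℂ} (hC : IsElliptic C)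
    (hsymm : C.IsSymm) :
    (∫ x, Complex.exp (-quadForm C x)) ^ 2 * C.det = (π : ℂ) ^ Fintype.card ι := by
  obtain ⟨Q, d, hQ, hd, rfl⟩ := hC.exists_eq_realCongruence hsymm
  have hint : ∫ x, Complex.exp (-quadForm (realCongruence Q d) x) =
      |Q.det⁻¹| • ∫ y : ι → ℝ, Complex.exp (-∑ i, d i * (y i : ℂ) ^ 2) := by
    simp_rw [quadForm_realCongruence]
    rw [← integral_comp_mulVec hQ fun y => Complex.exp (-∑ i, d i * (y i : ℂ) ^ 2)]
    exact (PiLp.volume_preserving_ofLp ι).integral_comp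
      (MeasurableEquiv.toLp 2 (ι → ℝ)).symm.measurableEmbedding
      fun x => Complex.exp (-∑ i, d i * ((Q *ᵥ x) i : ℂ) ^ 2)
  have hQ0 : (Q.det : ℂ) ≠ 0 := Complex.ofReal_ne_zero.mpr hQ.ne_zero
  have habs : ((|Q.det⁻¹| : ℝ) : ℂ) ^ 2 * (Q.det : ℂ) ^ 2 = 1 := by
    rw [← Complex.ofReal_pow, sq_abs, Complex.ofReal_pow, Complex.ofReal_inv, inv_pow,
      inv_mul_cancel₀ (pow_ne_zero 2 hQ0)]
  rw [hint, det_realCongruence, Complex.real_smul, mul_pow,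
    ← sq_integral_cexp_neg_sum_mul_sq_mul_prod hd]
  linear_combination ((∫ y : ι → ℝ, Complex.exp (-∑ i, d i * (y i : ℂ) ^ 2)) ^ 2 * ∏ i, d i) * habs

theorem IsElliptic.exists_sqrt_det_integral_cexp_neg_quadForm_inv {C : Matrix ι ι ℂ}
    (hC : IsElliptic C) (hsymm : C.IsSymm) :
    ∃ d : ℂ, d ^ 2 = C.det ∧
      ∫ x, Complex.exp (-quadForm C⁻¹ x) = (√π : ℂ) ^ Fintype.card ι * d := by
  have hsqrt : ((√π : ℂ) ^ Fintype.card ι) ^ 2 = (π : ℂ) ^ Fintype.card ι := by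
    rw [pow_right_comm, ← Complex.ofReal_pow, Real.sq_sqrt pi_nonneg]
  have hsqrt_ne : (√π : ℂ) ^ Fintype.card ι ≠ 0 :=
    pow_ne_zero _ (Complex.ofReal_ne_zero.mpr (Real.sqrt_pos.mpr pi_pos).ne')
  have hdet : C⁻¹.det * C.det = 1 := by
    rw [← Matrix.det_mul, Matrix.nonsing_inv_mul _
      ((Matrix.isUnit_iff_isUnit_det C).mp (hC.isUnit hsymm)), Matrix.det_one]
  have hsq := (hC.inv hsymm).sq_integral_cexp_neg_quadForm_mul_det hsymm.inv
  refine ⟨(∫ x, Complex.exp (-quadForm C⁻¹ x)) / (√π : ℂ) ^ Fintype.card ι, ?_,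
    (mul_div_cancel₀ _ hsqrt_ne).symm⟩
  rw [div_pow, hsqrt, div_eq_iff (hsqrt ▸ pow_ne_zero 2 hsqrt_ne)]
  linear_combination C.det * hsq - (∫ x, Complex.exp (-quadForm C⁻¹ x)) ^ 2 * hdet

end LinearAlgebra

section MellinExponential

variable {a z : ℂ}

theorem norm_cpow_smul_cexp_neg_mul (a z : ℂ) {t : ℝ} (ht : 0 < t) :
    ‖(t : ℂ) ^ (a - 1) • Complex.exp (-(t * z))‖ = t ^ (a.re - 1) * rexp (-z.re * t) := by
  rw [norm_smul, Complex.norm_cpow_eq_rpow_re_of_pos ht, Complex.norm_exp]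
  simp [mul_comm]

theorem integrableOn_rpow_mul_exp_neg_mul {s b : ℝ} (hs : 0 < s) (hb : 0 < b) :
    IntegrableOn (fun t : ℝ => t ^ (s - 1) * rexp (-b * t)) (Set.Ioi 0) := by
  simpa only [rpow_one] using
    integrableOn_rpow_mul_exp_neg_mul_rpow (p := 1) (by linarith : -1 < s - 1) one_pos hb

theorem mellinConvergent_cexp_neg_mul (ha : 0 < a.re) (hz : 0 < z.re) :
    MellinConvergent (fun t : ℝ => Complex.exp (-(t * z))) a := by
  refine (integrableOn_rpow_mul_exp_neg_mul ha hz).mono' ?_ ?_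
  · exact Measurable.aestronglyMeasurable (by fun_prop)
  · filter_upwards [ae_restrict_mem measurableSet_Ioi] with t ht
    exact (norm_cpow_smul_cexp_neg_mul a z ht).le

theorem hasDerivAt_mellin_cexp_neg_mul (ha : 0 < a.re) (hz : 0 < z.re) :
    HasDerivAt (fun w => mellin (fun t : ℝ => Complex.exp (-(t * w))) a)
      (-mellin (fun t : ℝ => Complex.exp (-(t * z))) (a + 1)) z := by
  have ha' : 0 < (a + 1).re := by simpa using by linarith
  have hpow : ∀ {t : ℝ}, 0 < t → (t : ℂ) ^ (a + 1 - 1) = (t : ℂ) ^ (a - 1) * t := fun ht => by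
    have ht0 : ((_ : ℝ) : ℂ) ≠ 0 := Complex.ofReal_ne_zero.mpr ht.ne'
    rw [show a + 1 - 1 = a - 1 + 1 by ring, Complex.cpow_add _ _ ht0, Complex.cpow_one]
  rw [mellin, ← integral_neg]
  refine (hasDerivAt_integral_of_dominated_loc_of_deriv_le
    (μ := volume.restrict (Set.Ioi (0 : ℝ))) (s := {w : ℂ | z.re / 2 < w.re})
    (F := fun w t => (t : ℂ) ^ (a - 1) • Complex.exp (-(t * w)))
    (F' := fun w t => -((t : ℂ) ^ (a + 1 - 1) • Complex.exp (-(t * w))))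
    (bound := fun t => t ^ ((a + 1).re - 1) * rexp (-(z.re / 2) * t))
    ((isOpen_lt continuous_const Complex.continuous_re).mem_nhds (half_lt_self hz))
    (Eventually.of_forall fun w => Measurable.aestronglyMeasurable (by fun_prop))
    (mellinConvergent_cexp_neg_mul ha hz) (Measurable.aestronglyMeasurable (by fun_prop)) ?_
    (integrableOn_rpow_mul_exp_neg_mul ha' (half_pos hz)) ?_).2
  · filter_upwards [ae_restrict_mem measurableSet_Ioi] with t (ht : 0 < t) w (hw : z.re / 2 < w.re)
    rw [norm_neg, norm_cpow_smul_cexp_neg_mul _ _ ht]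
    gcongr
  · filter_upwards [ae_restrict_mem measurableSet_Ioi] with t (ht : 0 < t) w _
    have hlin : HasDerivAt (fun w : ℂ => -((t : ℂ) * w)) (-(t : ℂ)) w := by
      simpa using ((hasDerivAt_id' w).const_mul (t : ℂ)).fun_neg
    refine (hlin.cexp.const_mul ((t : ℂ) ^ (a - 1))).congr_deriv ?_
    rw [hpow ht, smul_eq_mul]
    ring

theorem mellin_cexp_neg_mul_ofReal (ha : 0 < a.re) {r : ℝ} (hr : 0 < r) :
    mellin (fun t : ℝ => Complex.exp (-(t * r))) a = Complex.Gamma a * (r : ℂ) ^ (-a) := by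
  have harg : (r : ℂ).arg ≠ π := by
    rw [Complex.arg_ofReal_of_nonneg hr.le]
    exact pi_pos.ne
  rw [Complex.cpow_neg, ← Complex.inv_cpow _ _ harg, ← one_div, mul_comm,
    ← Complex.integral_cpow_mul_exp_neg_mul_Ioi ha hr]
  simp only [mellin, smul_eq_mul, mul_comm (r : ℂ)]

theorem mellin_cexp_neg_mul (ha : 0 < a.re) (hz : 0 < z.re) :
    mellin (fun t : ℝ => Complex.exp (-(t * z))) a = Complex.Gamma a * z ^ (-a) := by
  have hU : IsOpen {w : ℂ | 0 < w.re} := isOpen_lt continuous_const Complex.continuous_re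
  have hleft : DifferentiableOn ℂ (fun w => mellin (fun t : ℝ => Complex.exp (-(t * w))) a)
      {w : ℂ | 0 < w.re} := fun w hw =>
    (hasDerivAt_mellin_cexp_neg_mul ha hw).differentiableAt.differentiableWithinAt
  have hright : DifferentiableOn ℂ (fun w : ℂ => Complex.Gamma a * w ^ (-a))
      {w : ℂ | 0 < w.re} := fun w hw =>
    ((differentiableAt_id.cpow_const (Or.inl hw)).const_mul _).differentiableWithinAt
  have hreal : Tendsto (fun r : ℝ => (r : ℂ)) (𝓝[>] 1) (𝓝[≠] 1) := by
    refine tendsto_nhdsWithin_iff.mpr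
      ⟨(Complex.continuous_ofReal.tendsto' 1 1 rfl).mono_left nhdsWithin_le_nhds, ?_⟩
    filter_upwards [self_mem_nhdsWithin] with r (hr : 1 < r)
    exact Complex.ofReal_ne_one.mpr hr.ne'
  refine AnalyticOnNhd.eqOn_of_preconnected_of_frequently_eq (z₀ := 1) (hleft.analyticOnNhd hU)
    (hright.analyticOnNhd hU) (convex_halfSpace_re_gt 0).isPreconnected (by simp)
    (hreal.frequently (Eventually.frequently ?_)) hz
  filter_upwards [self_mem_nhdsWithin] with r (hr : 1 < r)
  exact mellin_cexp_neg_mul_ofReal ha (one_pos.trans hr)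

end MellinExponential

section PosHomogeneous

variable {V : Type*} [NormedAddCommGroup V] [NormedSpace ℝ V]

/-- Continuous functions `q : V → ℂ`, homogeneous of degree two over the reals and with positive
real part away from the origin, such as the quadratic form of an elliptic matrix. -/
structure IsPosHomogeneous (q : V → ℂ) : Prop where
  continuous : Continuous q
  map_smul : ∀ (a : ℝ) (x : V), q (a • x) = a ^ 2 * q x
  re_pos : ∀ x : V, x ≠ 0 → 0 < (q x).re

namespace IsPosHomogeneous

variable {q : V → ℂ}

theorem map_zero (hq : IsPosHomogeneous q) : q 0 = 0 := by
  simpa using hq.map_smul 0 0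

theorem re_nonneg (hq : IsPosHomogeneous q) (x : V) : 0 ≤ (q x).re := by
  rcases eq_or_ne x 0 with rfl | hx
  · simp [hq.map_zero]
  · exact (hq.re_pos x hx).le

theorem ofReal_re (hq : IsPosHomogeneous q) : IsPosHomogeneous fun x => ((q x).re : ℂ) where
  continuous := Complex.continuous_ofReal.comp (Complex.continuous_re.comp hq.continuous)
  map_smul a x := by
    rw [hq.map_smul, ← Complex.ofReal_pow, Complex.re_ofReal_mul, Complex.ofReal_mul]
  re_pos x hx := by simpa using hq.re_pos x hx

theorem norm_cexp_neg_mul_le_one (hq : IsPosHomogeneous q) {t : ℝ} (ht : 0 ≤ t) (x : V) :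
    ‖Complex.exp (-(t * q x))‖ ≤ 1 := by
  rw [Complex.norm_exp, Real.exp_le_one_iff, Complex.neg_re, Complex.re_ofReal_mul]
  exact neg_nonpos.mpr (mul_nonneg ht (hq.re_nonneg x))

theorem exists_mul_norm_sq_le_re [FiniteDimensional ℝ V] (hq : IsPosHomogeneous q) :
    ∃ c, 0 < c ∧ ∀ x, c * ‖x‖ ^ 2 ≤ (q x).re := by
  rcases subsingleton_or_nontrivial V with hV | hV
  · exact ⟨1, one_pos, fun x => by simp [Subsingleton.elim x 0, hq.map_zero]⟩
  obtain ⟨x₀, hx₀, hmin⟩ := (isCompact_sphere (0 : V) 1).exists_isMinOn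
    (NormedSpace.sphere_nonempty.mpr zero_le_one)
    (Complex.continuous_re.comp hq.continuous).continuousOn
  refine ⟨(q x₀).re, hq.re_pos x₀ (ne_zero_of_mem_unit_sphere ⟨x₀, hx₀⟩), fun x => ?_⟩
  rcases eq_or_ne x 0 with rfl | hx
  · simp [hq.map_zero]
  have hnorm : ‖x‖ ≠ 0 := norm_ne_zero_iff.mpr hx
  have hsphere : (q x₀).re ≤ (q (‖x‖⁻¹ • x)).re := hmin (by simp [norm_smul, hnorm])
  have hscale : (q x).re = ‖x‖ ^ 2 * (q (‖x‖⁻¹ • x)).re := by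
    rw [← Complex.re_ofReal_mul, Complex.ofReal_pow, ← hq.map_smul, smul_inv_smul₀ hnorm]
  rw [hscale, mul_comm]
  gcongr

end IsPosHomogeneous

end PosHomogeneous

section GaussianIntegral

open Module

variable {V : Type*} [MeasurableSpace V]

/-- The integral `∫ exp (-t q(x)) φ(x) dμ(x)` of `φ` against the Gaussian with exponent `-t q`. -/
def gaussianIntegral (μ : Measure V) (q φ : V → ℂ) (t : ℝ) : ℂ :=
  ∫ x, Complex.exp (-(t * q x)) * φ x ∂μ

variable {μ : Measure V} {q φ ψ : V → ℂ}

theorem gaussianIntegral_ofReal_re (q φ : V → ℂ) (t : ℝ) :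
    gaussianIntegral μ (fun x => ((q x).re : ℂ)) (fun x => (‖φ x‖ : ℂ)) t =
      (∫ x, ‖Complex.exp (-(t * q x)) * φ x‖ ∂μ : ℝ) := by
  rw [gaussianIntegral, ← integral_complex_ofReal]
  refine integral_congr_ae (Eventually.of_forall fun x => ?_)
  simp [Complex.norm_exp]

section CompactSupport

variable [TopologicalSpace V] [BorelSpace V] [IsFiniteMeasureOnCompacts μ]

theorem integrable_cexp_neg_mul_mul (hq : Continuous q) (hφ : Continuous φ)
    (hsupp : HasCompactSupport φ) (t : ℝ) :
    Integrable (fun x => Complex.exp (-(t * q x)) * φ x) μ :=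
  Continuous.integrable_of_hasCompactSupport (by fun_prop) hsupp.mul_left

end CompactSupport

variable [NormedAddCommGroup V] [NormedSpace ℝ V] [BorelSpace V]

section IsFiniteMeasureOnCompacts

variable [IsFiniteMeasureOnCompacts μ]

theorem norm_gaussianIntegral_le (hq : IsPosHomogeneous q) (hφ : Continuous φ)
    (hsupp : HasCompactSupport φ) {t : ℝ} (ht : 0 ≤ t) :
    ‖gaussianIntegral μ q φ t‖ ≤ ∫ x, ‖φ x‖ ∂μ := by
  refine norm_integral_le_of_norm_le (hφ.integrable_of_hasCompactSupport hsupp).norm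
    (Eventually.of_forall fun x => ?_)
  rw [norm_mul]
  exact mul_le_of_le_one_left (norm_nonneg _) (hq.norm_cexp_neg_mul_le_one ht x)

theorem hasDerivAt_gaussianIntegral (hq : IsPosHomogeneous q) (hφ : Continuous φ)
    (hsupp : HasCompactSupport φ) {t : ℝ} (ht : 0 < t) :
    HasDerivAt (gaussianIntegral μ q φ) (-gaussianIntegral μ q (q * φ) t) t := by
  have hqφ : Continuous (q * φ) := hq.continuous.mul hφ
  have hint : ∀ s : ℝ, Integrable (fun x => Complex.exp (-(s * q x)) * φ x) μ :=
    integrable_cexp_neg_mul_mul hq.continuous hφ hsupp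
  have hint' : ∀ s : ℝ, Integrable (fun x => Complex.exp (-(s * q x)) * (q * φ) x) μ :=
    integrable_cexp_neg_mul_mul hq.continuous hqφ hsupp.mul_left
  rw [gaussianIntegral, ← integral_neg]
  refine (hasDerivAt_integral_of_dominated_loc_of_deriv_le (s := Set.Ioi 0)
    (F := fun s x => Complex.exp (-((s : ℝ) * q x)) * φ x)
    (F' := fun s x => -(Complex.exp (-((s : ℝ) * q x)) * (q * φ) x))
    (bound := fun x => ‖(q * φ) x‖) (Ioi_mem_nhds ht)
    (Eventually.of_forall fun s => (hint s).aestronglyMeasurable) (hint t)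
    (hint' t).neg.aestronglyMeasurable ?_
    (hqφ.integrable_of_hasCompactSupport hsupp.mul_left).norm ?_).2
  · refine Eventually.of_forall fun x s (hs : 0 < s) => ?_
    rw [norm_neg, norm_mul]
    exact mul_le_of_le_one_left (norm_nonneg _) (hq.norm_cexp_neg_mul_le_one hs.le x)
  · refine Eventually.of_forall fun x s _ => ?_
    have hlin : HasDerivAt (fun s : ℝ => -((s : ℂ) * q x)) (-q x) s := by
      simpa using ((hasDerivAt_id s).ofReal_comp.mul_const (q x)).fun_neg
    refine (hlin.cexp.mul_const (φ x)).congr_deriv ?_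
    rw [Pi.mul_apply]
    ring

theorem hasDerivAt_cpow_mul_gaussianIntegral (hq : IsPosHomogeneous q) (hφ : Continuous φ)
    (hsupp : HasCompactSupport φ) {d : ℂ} (hd : d ≠ 0) {t : ℝ} (ht : 0 < t) :
    HasDerivAt (fun t : ℝ => (t : ℂ) ^ (d / 2) * gaussianIntegral μ q φ t)
      (-4⁻¹ * ((t : ℂ) ^ (d / 2 - 1 - 1) *
        (4 * t ^ 2 * gaussianIntegral μ q (q * φ) t -
          2 * d * t * gaussianIntegral μ q φ t))) t := by
  have ht0 : (t : ℂ) ≠ 0 := Complex.ofReal_ne_zero.mpr ht.ne'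
  have hpow : HasDerivAt (fun t : ℝ => (t : ℂ) ^ (d / 2)) (d / 2 * (t : ℂ) ^ (d / 2 - 1)) t :=
    hasDerivAt_ofReal_cpow_const ht.ne' (div_ne_zero hd two_ne_zero)
  have hsucc : ∀ e : ℂ, (t : ℂ) ^ e = (t : ℂ) ^ (e - 1) * t := fun e => by
    rw [Complex.cpow_sub _ _ ht0, Complex.cpow_one, div_mul_cancel₀ _ ht0]
  refine (hpow.mul (hasDerivAt_gaussianIntegral hq hφ hsupp ht)).congr_deriv ?_
  rw [hsucc (d / 2), hsucc (d / 2 - 1)]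
  ring

theorem continuousWithinAt_cpow_mul_gaussianIntegral (hq : IsPosHomogeneous q) (hφ : Continuous φ)
    (hsupp : HasCompactSupport φ) {s : ℂ} (hs : 0 < s.re) :
    ContinuousWithinAt (fun t : ℝ => (t : ℂ) ^ s * gaussianIntegral μ q φ t) (Set.Ici 0) 0 := by
  have hs0 : s ≠ 0 := Complex.ne_zero_of_re_pos hs
  have hpow : Tendsto (fun t : ℝ => (t : ℂ) ^ s) (𝓝[≥] 0) (𝓝 0) :=
    ((Complex.continuous_ofReal_cpow_const hs).tendsto' 0 0 (by simp [hs0])).mono_left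
      nhdsWithin_le_nhds
  have hbdd : IsBoundedUnder (· ≤ ·) (𝓝[≥] 0) (norm ∘ gaussianIntegral μ q φ) :=
    isBoundedUnder_of_eventually_le <| eventually_mem_nhdsWithin.mono fun t (ht : 0 ≤ t) =>
      norm_gaussianIntegral_le hq hφ hsupp ht
  simpa [ContinuousWithinAt, hs0] using hpow.zero_mul_isBoundedUnder_le hbdd

end IsFiniteMeasureOnCompacts

variable [FiniteDimensional ℝ V]

theorem integrable_exp_neg_mul_norm_sq (μ : Measure V) [μ.IsAddHaarMeasure] {c : ℝ}
    (hc : 0 < c) :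
    Integrable (fun x => rexp (-(c * ‖x‖ ^ 2))) μ := by
  set k := finrank ℝ V + 1
  have hint : Integrable (fun x : V => ((1 : ℝ) + ‖x‖ ^ 2) ^ (-(2 * k : ℝ) / 2)) μ := by
    refine integrable_rpow_neg_one_add_norm_sq ?_
    simp only [k, Nat.cast_add, Nat.cast_one]
    linarith [(finrank ℝ V).cast_nonneg (α := ℝ)]
  refine (hint.const_mul (k.factorial * rexp c / c ^ k)).mono'
    (by fun_prop) (Eventually.of_forall fun x => ?_)
  have hpos : 0 < 1 + ‖x‖ ^ 2 := by positivity
  have hle : (c * (1 + ‖x‖ ^ 2)) ^ k / k.factorial ≤ rexp (c * (1 + ‖x‖ ^ 2)) :=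
    Real.pow_div_factorial_le_exp _ (by positivity) k
  have hexp : rexp (-(c * ‖x‖ ^ 2)) = rexp c / rexp (c * (1 + ‖x‖ ^ 2)) := by
    rw [← Real.exp_sub]
    ring_nf
  rw [Real.norm_of_nonneg (Real.exp_nonneg _), hexp, neg_div, mul_div_cancel_left₀ _ two_ne_zero,
    Real.rpow_neg hpos.le, Real.rpow_natCast]
  calc rexp c / rexp (c * (1 + ‖x‖ ^ 2))
      ≤ rexp c / ((c * (1 + ‖x‖ ^ 2)) ^ k / k.factorial) := by gcongr
    _ = k.factorial * rexp c / c ^ k * ((1 + ‖x‖ ^ 2) ^ k)⁻¹ := by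
      rw [mul_pow]
      field_simp

variable [μ.IsAddHaarMeasure]

theorem cpow_mul_gaussianIntegral (hq : IsPosHomogeneous q) (φ : V → ℂ) {t : ℝ} (ht : 0 < t) :
    (t : ℂ) ^ (finrank ℝ V / 2 : ℂ) * gaussianIntegral μ q φ t =
      ∫ y, Complex.exp (-q y) * φ ((√t)⁻¹ • y) ∂μ := by
  have hsqrt : √t ≠ 0 := (Real.sqrt_pos.mpr ht).ne'
  have hpow : (t : ℂ) ^ (finrank ℝ V / 2 : ℂ) = ((√t ^ finrank ℝ V : ℝ) : ℂ) := by
    rw [← Real.rpow_natCast, Real.sqrt_eq_rpow, ← Real.rpow_mul ht.le, Complex.ofReal_cpow ht.le]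
    push_cast
    ring_nf
  have hscale : ∀ x, Complex.exp (-q (√t • x)) * φ ((√t)⁻¹ • √t • x) =
      Complex.exp (-(t * q x)) * φ x := fun x => by
    rw [inv_smul_smul₀ hsqrt, hq.map_smul, ← Complex.ofReal_pow, Real.sq_sqrt ht.le]
  have hcomp := Measure.integral_comp_smul μ
    (fun y => Complex.exp (-q y) * φ ((√t)⁻¹ • y)) (√t)
  simp only [hscale] at hcomp
  rw [gaussianIntegral, hcomp, hpow, Complex.real_smul, ← mul_assoc, ← Complex.ofReal_mul,
    abs_of_pos (by positivity), mul_inv_cancel₀ (pow_ne_zero _ hsqrt), Complex.ofReal_one, one_mul]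

theorem tendsto_cpow_mul_gaussianIntegral (hq : IsPosHomogeneous q) (hφ : Continuous φ)
    (hsupp : HasCompactSupport φ) :
    Tendsto (fun t : ℝ => (t : ℂ) ^ (finrank ℝ V / 2 : ℂ) * gaussianIntegral μ q φ t) atTop
      (𝓝 (φ 0 * ∫ x, Complex.exp (-q x) ∂μ)) := by
  obtain ⟨c, hc, hcoercive⟩ := hq.exists_mul_norm_sq_le_re
  obtain ⟨M, hM⟩ := hφ.bounded_above_of_compact_support hsupp
  have hq' := hq.continuous
  have hlim : Tendsto (fun t : ℝ => ∫ y, Complex.exp (-q y) * φ ((√t)⁻¹ • y) ∂μ) atTop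
      (𝓝 (∫ y, Complex.exp (-q y) * φ 0 ∂μ)) := by
    refine tendsto_integral_filter_of_dominated_convergence (fun y => rexp (-(c * ‖y‖ ^ 2)) * M)
      (Eventually.of_forall fun t => Continuous.aestronglyMeasurable (by fun_prop))
      (Eventually.of_forall fun t => Eventually.of_forall fun y => ?_)
      ((integrable_exp_neg_mul_norm_sq μ hc).mul_const M) (Eventually.of_forall fun y => ?_)
    · rw [norm_mul, Complex.norm_exp, Complex.neg_re]
      gcongr
      · exact hcoercive y
      · exact hM _
    · have hinv : Tendsto (fun t => (√t)⁻¹ • y) atTop (𝓝 0) := by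
        simpa using (tendsto_inv_atTop_zero.comp tendsto_sqrt_atTop).smul_const y
      exact ((hφ.tendsto 0).comp hinv).const_mul _
  rw [integral_mul_const, mul_comm] at hlim
  refine hlim.congr' ?_
  filter_upwards [eventually_gt_atTop 0] with t ht
  exact (cpow_mul_gaussianIntegral hq φ ht).symm

theorem isBigO_gaussianIntegral_atTop (hq : IsPosHomogeneous q) (hφ : Continuous φ)
    (hsupp : HasCompactSupport φ) :
    gaussianIntegral μ q φ =O[atTop] fun t => t ^ (-(finrank ℝ V / 2 : ℝ)) := by
  have hlim := (tendsto_cpow_mul_gaussianIntegral (μ := μ) hq hφ hsupp).isBigO_one ℝ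
  have hbdd := (Asymptotics.isBigO_refl (fun t : ℝ => t ^ (-(finrank ℝ V / 2 : ℝ))) atTop).mul
    hlim.norm_left
  simp only [mul_one] at hbdd
  refine Asymptotics.isBigO_norm_left.mp <| hbdd.congr' ?_ EventuallyEq.rfl
  filter_upwards [eventually_gt_atTop 0] with t ht
  rw [norm_mul, Complex.norm_cpow_eq_rpow_re_of_pos ht, ← mul_assoc, ← Real.rpow_add ht]
  simp

theorem mellinConvergent_gaussianIntegral (hq : IsPosHomogeneous q) (hφ : Continuous φ)
    (hsupp : HasCompactSupport φ) {s : ℂ} (hs : 0 < s.re) (hs' : s.re < finrank ℝ V / 2) :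
    MellinConvergent (gaussianIntegral μ q φ) s := by
  have hcont : ContinuousOn (gaussianIntegral μ q φ) (Set.Ioi 0) := fun t ht =>
    (hasDerivAt_gaussianIntegral hq hφ hsupp ht).continuousAt.continuousWithinAt
  refine mellinConvergent_of_isBigO_rpow (hcont.locallyIntegrableOn measurableSet_Ioi)
    (isBigO_gaussianIntegral_atTop hq hφ hsupp) hs' (b := 0) ?_ hs
  refine Asymptotics.IsBigO.of_bound (∫ x, ‖φ x‖ ∂μ) ?_
  filter_upwards [self_mem_nhdsWithin] with t (ht : 0 < t)
  simpa using norm_gaussianIntegral_le hq hφ hsupp ht.le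

theorem integrable_prod_cpow_smul_cexp_neg_mul_mul (hq : IsPosHomogeneous q) (hφ : Continuous φ)
    (hsupp : HasCompactSupport φ) {s : ℂ} (hs : 0 < s.re) (hs' : s.re < finrank ℝ V / 2) :
    Integrable (fun p : V × ℝ => (p.2 : ℂ) ^ (s - 1) • (Complex.exp (-(p.2 * q p.1)) * φ p.1))
      (μ.prod (volume.restrict (Set.Ioi 0))) := by
  have hconv : MellinConvergent
      (gaussianIntegral μ (fun x => ((q x).re : ℂ)) fun x => (‖φ x‖ : ℂ)) s :=
    mellinConvergent_gaussianIntegral hq.ofReal_re (by fun_prop)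
      (hsupp.comp_left (g := fun z : ℂ => (‖z‖ : ℂ)) (by simp)) hs hs'
  have hmeas : Measurable fun p : V × ℝ => (p.2 : ℂ) ^ (s - 1) •
      (Complex.exp (-(p.2 * q p.1)) * φ p.1) := by
    have hqm := hq.continuous.measurable
    have hφm := hφ.measurable
    fun_prop
  rw [integrable_prod_iff' hmeas.aestronglyMeasurable]
  refine ⟨Eventually.of_forall fun t =>
    (integrable_cexp_neg_mul_mul hq.continuous hφ hsupp t).smul ((t : ℂ) ^ (s - 1)),
    hconv.norm.congr (Eventually.of_forall fun t => ?_)⟩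
  simp only [norm_smul, gaussianIntegral_ofReal_re, Complex.norm_real, integral_const_mul]
  rw [Real.norm_of_nonneg (integral_nonneg fun x => norm_nonneg _)]

theorem mellin_gaussianIntegral (hq : IsPosHomogeneous q) (hφ : Continuous φ)
    (hsupp : HasCompactSupport φ) {s : ℂ} (hs : 0 < s.re) (hs' : s.re < finrank ℝ V / 2) :
    mellin (gaussianIntegral μ q φ) s = Complex.Gamma s * ∫ x, q x ^ (-s) * φ x ∂μ := by
  have : Nontrivial V := by
    refine Module.nontrivial_of_finrank_pos (R := ℝ) (Nat.cast_pos (α := ℝ).mp ?_)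
    linarith
  calc mellin (gaussianIntegral μ q φ) s
      = ∫ t in Set.Ioi (0 : ℝ), ∫ x, (t : ℂ) ^ (s - 1) •
          (Complex.exp (-(t * q x)) * φ x) ∂μ := by
        simp only [mellin, gaussianIntegral, integral_smul]
    _ = ∫ x, (∫ t in Set.Ioi (0 : ℝ), (t : ℂ) ^ (s - 1) •
          (Complex.exp (-(t * q x)) * φ x)) ∂μ :=
        (integral_integral_swap
          (integrable_prod_cpow_smul_cexp_neg_mul_mul hq hφ hsupp hs hs')).symm
    _ = ∫ x, Complex.Gamma s * (q x ^ (-s) * φ x) ∂μ := by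
        refine integral_congr_ae ?_
        filter_upwards [Measure.ae_ne μ 0] with x hx
        rw [← mul_assoc, ← mellin_cexp_neg_mul hs (hq.re_pos x hx), mellin, ← integral_mul_const]
        simp only [smul_eq_mul, mul_assoc]
    _ = Complex.Gamma s * ∫ x, q x ^ (-s) * φ x ∂μ := integral_const_mul _ _

theorem mellin_gaussianIntegral_of_forall_eq (hq : IsPosHomogeneous q) (hφ : Continuous φ)
    (hφsupp : HasCompactSupport φ) (hψ : Continuous ψ) (hψsupp : HasCompactSupport ψ)
    (hdim : 2 < finrank ℝ V)
    (heq : ∀ t : ℝ, 0 < t → gaussianIntegral μ q ψ t =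
      4 * t ^ 2 * gaussianIntegral μ q (q * φ) t - 2 * finrank ℝ V * t * gaussianIntegral μ q φ t) :
    mellin (gaussianIntegral μ q ψ) (finrank ℝ V / 2 - 1) =
      -4 * (φ 0 * ∫ x, Complex.exp (-q x) ∂μ) := by
  have hdim' : (2 : ℝ) < finrank ℝ V := by exact_mod_cast hdim
  have hre : (finrank ℝ V / 2 - 1 : ℂ).re = finrank ℝ V / 2 - 1 := by simp
  have hre' : 0 < (finrank ℝ V / 2 : ℂ).re := by
    simpa using by linarith
  have hconv : MellinConvergent (gaussianIntegral μ q ψ) (finrank ℝ V / 2 - 1) :=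
    mellinConvergent_gaussianIntegral hq hψ hψsupp (by linarith) (by linarith)
  have hderiv : ∀ t ∈ Set.Ioi (0 : ℝ), HasDerivAt
      (fun t : ℝ => (t : ℂ) ^ (finrank ℝ V / 2 : ℂ) * gaussianIntegral μ q φ t)
      (-4⁻¹ * ((t : ℂ) ^ (finrank ℝ V / 2 - 1 - 1 : ℂ) • gaussianIntegral μ q ψ t)) t :=
    fun t (ht : 0 < t) => by
      rw [heq t ht]
      exact hasDerivAt_cpow_mul_gaussianIntegral hq hφ hφsupp
        (Nat.cast_ne_zero.mpr (by omega)) ht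
  have hFTC := integral_Ioi_of_hasDerivAt_of_tendsto
    (continuousWithinAt_cpow_mul_gaussianIntegral hq hφ hφsupp hre') hderiv (hconv.const_mul _)
    (tendsto_cpow_mul_gaussianIntegral hq hφ hφsupp)
  have hd0 : (finrank ℝ V / 2 : ℂ) ≠ 0 := Complex.ne_zero_of_re_pos hre'
  rw [integral_const_mul, Complex.ofReal_zero, Complex.zero_cpow hd0, zero_mul, sub_zero] at hFTC
  rw [← hFTC, mellin]
  ring

end GaussianIntegral

section PartialDerivatives

variable {n : ℕ} {F : Type*} [NormedAddCommGroup F] [NormedSpace ℝ F]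

theorem contDiff_pd {f : EuclideanSpace ℝ (Fin n) → F} {k m : WithTop ℕ∞} (hf : ContDiff ℝ m f)
    (hk : k + 1 ≤ m) (r : Fin n) : ContDiff ℝ k (pd r f) :=
  (hf.fderiv_right hk).clm_apply contDiff_const

theorem hasCompactSupport_pd {f : EuclideanSpace ℝ (Fin n) → F} (hf : HasCompactSupport f)
    (r : Fin n) : HasCompactSupport (pd r f) :=
  hf.fderiv_apply ℝ _

variable {f g : EuclideanSpace ℝ (Fin n) → ℂ} {x : EuclideanSpace ℝ (Fin n)}

theorem pd_mul (hf : DifferentiableAt ℝ f x) (hg : DifferentiableAt ℝ g x) (r : Fin n) :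
    pd r (fun x => f x * g x) x = pd r f x * g x + f x * pd r g x := by
  rw [pd, fderiv_fun_mul hf hg, add_comm, mul_comm (pd r f x)]
  rfl

theorem pd_const_mul (hf : DifferentiableAt ℝ f x) (c : ℂ) (r : Fin n) :
    pd r (fun x => c * f x) x = c * pd r f x := by
  rw [pd, fderiv_const_mul hf]
  rfl

theorem pd_cexp (hf : DifferentiableAt ℝ f x) (r : Fin n) :
    pd r (fun x => Complex.exp (f x)) x = pd r f x * Complex.exp (f x) := by
  rw [pd, hf.hasFDerivAt.cexp.fderiv, mul_comm]
  rfl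

theorem integral_mul_pd (hg : ContDiff ℝ 1 g) (hf : ContDiff ℝ 1 f) (hsupp : HasCompactSupport f)
    (r : Fin n) : ∫ x, g x * pd r f x = -∫ x, pd r g x * f x := by
  have hpd : ∀ {u : EuclideanSpace ℝ (Fin n) → ℂ}, ContDiff ℝ 1 u → Continuous (pd r u) :=
    fun hu => (contDiff_pd hu (zero_add 1).le r).continuous
  have hint : ∀ {a b : EuclideanSpace ℝ (Fin n) → ℂ}, Continuous a → Continuous b →
      HasCompactSupport b → Integrable (fun x => a x * b x) := fun ha hb h =>
    (ha.mul hb).integrable_of_hasCompactSupport h.mul_left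
  exact integral_mul_fderiv_eq_neg_fderiv_mul_of_integrable
    (hint (hpd hg) hf.continuous hsupp)
    (hint hg.continuous (hpd hf) (hasCompactSupport_pd hsupp r))
    (hint hg.continuous hf.continuous hsupp)
    (fun x _ => hg.differentiable one_ne_zero x) (fun x _ => hf.differentiable one_ne_zero x)

theorem integral_mul_pd_pd (hg : ContDiff ℝ 2 g) (hf : ContDiff ℝ 2 f) (hsupp : HasCompactSupport f)
    (r s : Fin n) : ∫ x, g x * pd r (pd s f) x = ∫ x, pd s (pd r g) x * f x := by
  have hpd : ∀ {u : EuclideanSpace ℝ (Fin n) → ℂ} (i : Fin n), ContDiff ℝ 2 u →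
      ContDiff ℝ 1 (pd i u) := fun i hu => contDiff_pd hu one_add_one_eq_two.le i
  rw [integral_mul_pd (hg.of_le one_le_two) (hpd s hf) (hasCompactSupport_pd hsupp s),
    integral_mul_pd (hpd r hg) (hf.of_le one_le_two) hsupp, neg_neg]

theorem continuous_pd_pd (hf : ContDiff ℝ 2 f) (r s : Fin n) : Continuous (pd r (pd s f)) :=
  (contDiff_pd (contDiff_pd hf one_add_one_eq_two.le s) (zero_add 1).le r).continuous

/-- The constant coefficient second order operator `Σ A_{rs} ∂_r ∂_s`. -/
def ellipticOp (A : Matrix (Fin n) (Fin n) ℂ) (f : EuclideanSpace ℝ (Fin n) → ℂ)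
    (x : EuclideanSpace ℝ (Fin n)) : ℂ :=
  ∑ r, ∑ s, A r s * pd r (pd s f) x

theorem continuous_ellipticOp (A : Matrix (Fin n) (Fin n) ℂ) (hf : ContDiff ℝ 2 f) :
    Continuous (ellipticOp A f) := by
  have hpd := continuous_pd_pd hf
  unfold ellipticOp
  fun_prop

theorem hasCompactSupport_ellipticOp (A : Matrix (Fin n) (Fin n) ℂ) (hf : HasCompactSupport f) :
    HasCompactSupport (ellipticOp A f) := by
  have hterm : ∀ r s, HasCompactSupport fun x => A r s * pd r (pd s f) x := fun r s =>
    (hasCompactSupport_pd (hasCompactSupport_pd hf s) r).mul_left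
  have hsum : ellipticOp A f = ∑ r, ∑ s, fun x => A r s * pd r (pd s f) x := by
    funext x
    simp only [ellipticOp, Finset.sum_apply]
  rw [hsum]
  exact HasCompactSupport.finset_sum fun r _ => HasCompactSupport.finset_sum fun s _ => hterm r s

open scoped Matrix in
theorem integral_mul_ellipticOp (A : Matrix (Fin n) (Fin n) ℂ) (hg : ContDiff ℝ 2 g)
    (hf : ContDiff ℝ 2 f) (hsupp : HasCompactSupport f) :
    ∫ x, g x * ellipticOp A f x = ∫ x, ellipticOp Aᵀ g x * f x := by
  have hleft : ∀ r s, Integrable fun x => A r s * (g x * pd r (pd s f) x) := fun r s =>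
    ((hg.continuous.mul (continuous_pd_pd hf r s)).integrable_of_hasCompactSupport
      (hasCompactSupport_pd (hasCompactSupport_pd hsupp s) r).mul_left).const_mul _
  have hright : ∀ r s, Integrable fun x => A r s * (pd s (pd r g) x * f x) := fun r s =>
    (((continuous_pd_pd hg s r).mul hf.continuous).integrable_of_hasCompactSupport 
      hsupp.mul_left).const_mul _
  calc ∫ x, g x * ellipticOp A f x
      = ∫ x, ∑ r, ∑ s, A r s * (g x * pd r (pd s f) x) := by
        simp only [ellipticOp, Finset.mul_sum, mul_left_comm]
    _ = ∑ r, ∑ s, A r s * ∫ x, g x * pd r (pd s f) x := by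
        rw [integral_finsetSum _ fun r _ => integrable_finsetSum _ fun s _ => hleft r s]
        simp only [integral_finsetSum _ fun s _ => hleft _ s, integral_const_mul]
    _ = ∑ r, ∑ s, A r s * ∫ x, pd s (pd r g) x * f x := by
        simp only [integral_mul_pd_pd hg hf hsupp]
    _ = ∫ x, ∑ r, ∑ s, A r s * (pd s (pd r g) x * f x) := by
        rw [integral_finsetSum _ fun r _ => integrable_finsetSum _ fun s _ => hright r s]
        simp only [integral_finsetSum _ fun s _ => hright _ s, integral_const_mul]
    _ = ∫ x, ellipticOp Aᵀ g x * f x := by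
        simp only [ellipticOp, Finset.sum_mul, Matrix.transpose_apply, mul_assoc]
        exact integral_congr_ae (Eventually.of_forall fun x => Finset.sum_comm)

end PartialDerivatives

section Gaussian

open Module
open scoped Matrix

variable {n : ℕ} {A C : Matrix (Fin n) (Fin n) ℂ}

theorem hasFDerivAt_complexify (k : Fin n) (x : EuclideanSpace ℝ (Fin n)) :
    HasFDerivAt (fun x : EuclideanSpace ℝ (Fin n) => complexify x k)
      (Complex.ofRealCLM.comp (EuclideanSpace.proj (𝕜 := ℝ) k)) x :=
  (Complex.ofRealCLM.comp (EuclideanSpace.proj (𝕜 := ℝ) k)).hasFDerivAt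

theorem hasFDerivAt_mulVec_complexify (C : Matrix (Fin n) (Fin n) ℂ) (r : Fin n)
    (x : EuclideanSpace ℝ (Fin n)) :
    HasFDerivAt (fun x => (C *ᵥ complexify x) r)
      (∑ k, C r k • Complex.ofRealCLM.comp (EuclideanSpace.proj (𝕜 := ℝ) k)) x := by
  unfold Matrix.mulVec dotProduct
  exact HasFDerivAt.fun_sum fun k _ => (hasFDerivAt_complexify k x).const_mul (C r k)

theorem pd_mulVec_complexify (C : Matrix (Fin n) (Fin n) ℂ) (r s : Fin n)
    (x : EuclideanSpace ℝ (Fin n)) : pd s (fun x => (C *ᵥ complexify x) r) x = C r s := by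
  rw [pd, (hasFDerivAt_mulVec_complexify C r x).fderiv]
  simp [apply_ite]

theorem pd_quadForm (hC : C.IsSymm) (s : Fin n) (x : EuclideanSpace ℝ (Fin n)) :
    pd s (quadForm C) x = 2 * (C *ᵥ complexify x) s := by
  have hderiv := HasFDerivAt.fun_sum (u := Finset.univ) fun k _ =>
    (hasFDerivAt_complexify k x).fun_mul (hasFDerivAt_mulVec_complexify C k x)
  rw [funext (quadForm_eq_dotProduct C), pd]
  unfold dotProduct
  rw [hderiv.fderiv]
  have hcol : ∑ k, complexify x k * C k s = (C *ᵥ complexify x) s := by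
    simp only [Matrix.mulVec, dotProduct, hC.apply, mul_comm]
  simpa [apply_ite, Finset.sum_add_distrib, two_mul] using hcol

theorem pd_cexp_neg_mul_quadForm (hC : C.IsSymm) (t : ℂ) (s : Fin n)
    (x : EuclideanSpace ℝ (Fin n)) :
    pd s (fun x => Complex.exp (-(t * quadForm C x))) x =
      -2 * t * (C *ᵥ complexify x) s * Complex.exp (-(t * quadForm C x)) := by
  have hq : DifferentiableAt ℝ (quadForm C) x :=
    (contDiff_quadForm C).contDiffAt.differentiableAt one_ne_zero
  simp only [← neg_mul]
  rw [pd_cexp (hq.const_mul _), pd_const_mul hq, pd_quadForm hC]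
  ring

theorem pd_pd_cexp_neg_mul_quadForm (hC : C.IsSymm) (t : ℂ) (r s : Fin n)
    (x : EuclideanSpace ℝ (Fin n)) :
    pd r (pd s fun x => Complex.exp (-(t * quadForm C x))) x =
      (4 * t ^ 2 * ((C *ᵥ complexify x) r * (C *ᵥ complexify x) s) - 2 * t * C s r) *
        Complex.exp (-(t * quadForm C x)) := by
  have hq : DifferentiableAt ℝ (quadForm C) x :=
    (contDiff_quadForm C).contDiffAt.differentiableAt one_ne_zero
  have hy := (hasFDerivAt_mulVec_complexify C s x).differentiableAt
  rw [funext (pd_cexp_neg_mul_quadForm hC t s),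
    pd_mul (hy.const_mul _) (hq.const_mul _).fun_neg.cexp, pd_const_mul hy,
    pd_mulVec_complexify, pd_cexp_neg_mul_quadForm hC]
  ring

theorem ellipticOp_cexp_neg_mul_quadForm (A : Matrix (Fin n) (Fin n) ℂ) (hC : C.IsSymm) (t : ℂ)
    (x : EuclideanSpace ℝ (Fin n)) :
    ellipticOp A (fun x => Complex.exp (-(t * quadForm C x))) x =
      (4 * t ^ 2 * (C *ᵥ complexify x ⬝ᵥ A *ᵥ (C *ᵥ complexify x)) - 2 * t * (A * C).trace) *
        Complex.exp (-(t * quadForm C x)) := by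
  generalize hy : C *ᵥ complexify x = y
  simp only [ellipticOp, pd_pd_cexp_neg_mul_quadForm hC, hy]
  simp only [dotProduct, Matrix.mulVec, Matrix.trace, Matrix.diag, Matrix.mul_apply,
    Finset.mul_sum, ← Finset.sum_sub_distrib, Finset.sum_mul]
  exact Finset.sum_congr rfl fun r _ => Finset.sum_congr rfl fun s _ => by ring

theorem IsElliptic.isPosHomogeneous (hC : IsElliptic C) : IsPosHomogeneous (quadForm C) where
  continuous := (contDiff_quadForm C (m := 0)).continuous
  map_smul := quadForm_smul C
  re_pos := hC

theorem ellipticOp_transpose_cexp_neg_mul_quadForm_inv (hA : IsElliptic A) (t : ℂ)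
    (x : EuclideanSpace ℝ (Fin n)) :
    ellipticOp Aᵀ (fun x => Complex.exp (-(t * quadForm (symmPart A)⁻¹ x))) x =
      (4 * t ^ 2 * quadForm (symmPart A)⁻¹ x - 2 * t * n) *
        Complex.exp (-(t * quadForm (symmPart A)⁻¹ x)) := by
  have hdet : IsUnit (symmPart A).det :=
    (Matrix.isUnit_iff_isUnit_det _).mp (hA.symmPart.isUnit (symmPart_isSymm A))
  have hsymm : (symmPart A)⁻¹.IsSymm := (symmPart_isSymm A).inv
  rw [ellipticOp_cexp_neg_mul_quadForm _ hsymm, ← dotProduct_symmPart_mulVec,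
    ← trace_symmPart_mul _ hsymm, symmPart_transpose, Matrix.mulVec_mulVec,
    Matrix.mul_nonsing_inv _ hdet, Matrix.one_mulVec, Matrix.trace_one, Fintype.card_fin,
    quadForm_eq_dotProduct, dotProduct_comm]

theorem gaussianIntegral_ellipticOp (hA : IsElliptic A) {φ : EuclideanSpace ℝ (Fin n) → ℂ}
    (hφ : ContDiff ℝ 2 φ) (hsupp : HasCompactSupport φ) (t : ℝ) :
    gaussianIntegral volume (quadForm (symmPart A)⁻¹) (ellipticOp A φ) t =
      4 * t ^ 2 *
          gaussianIntegral volume (quadForm (symmPart A)⁻¹) (quadForm (symmPart A)⁻¹ * φ) t -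
        2 * n * t * gaussianIntegral volume (quadForm (symmPart A)⁻¹) φ t := by
  set q := quadForm (symmPart A)⁻¹ with hq
  have hqsmooth : ContDiff ℝ 2 q := contDiff_quadForm _
  have hexp : ContDiff ℝ 2 fun x => Complex.exp (-((t : ℂ) * q x)) :=
    (contDiff_const.mul hqsmooth).neg.cexp
  have hint : Integrable fun x => Complex.exp (-(t * q x)) * φ x :=
    integrable_cexp_neg_mul_mul hqsmooth.continuous hφ.continuous hsupp t
  have hint' : Integrable fun x => Complex.exp (-(t * q x)) * (q * φ) x :=
    integrable_cexp_neg_mul_mul hqsmooth.continuous (hqsmooth.continuous.mul hφ.continuous)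
      hsupp.mul_left t
  calc gaussianIntegral volume q (ellipticOp A φ) t
      = ∫ x, ellipticOp Aᵀ (fun x => Complex.exp (-(t * q x))) x * φ x :=
        integral_mul_ellipticOp A hexp hφ hsupp
    _ = ∫ x, (4 * t ^ 2 * (Complex.exp (-(t * q x)) * (q * φ) x) -
          2 * n * t * (Complex.exp (-(t * q x)) * φ x)) := by
        refine integral_congr_ae (Eventually.of_forall fun x => ?_)
        simp only [hq, ellipticOp_transpose_cexp_neg_mul_quadForm_inv hA, Pi.mul_apply]
        ring
    _ = 4 * t ^ 2 * gaussianIntegral volume q (q * φ) t -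
          2 * n * t * gaussianIntegral volume q φ t := by
        rw [integral_sub (hint'.const_mul _) (hint.const_mul _), integral_const_mul,
          integral_const_mul]
        rfl

end Gaussian

section FundamentalSolution

variable {n : ℕ} {A : Matrix (Fin n) (Fin n) ℂ}

theorem sphereArea_eq (hn : n ≠ 0) : sphereArea n = n * (√π ^ n / Real.Gamma (n / 2 + 1)) := by
  have : Nonempty (Fin n) := Fin.pos_iff_nonempty.mp (Nat.pos_of_ne_zero hn)
  rw [sphereArea, EuclideanSpace.volume_ball, Fintype.card_fin, ENNReal.ofReal_one, one_pow,
    one_mul, ENNReal.toReal_ofReal]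
  exact div_nonneg (by positivity) (Real.Gamma_pos_of_pos (by positivity)).le

theorem sub_two_mul_sphereArea_mul_Gamma (hn : 2 < n) :
    ((n : ℝ) - 2) * sphereArea n * Real.Gamma (n / 2 - 1) = 4 * √π ^ n := by
  have hn' : (2 : ℝ) < n := mod_cast hn
  have hpos : 0 < (n : ℝ) / 2 - 1 := by linarith
  have hΓ : Real.Gamma (n / 2 - 1) ≠ 0 := (Real.Gamma_pos_of_pos hpos).ne'
  have hrec : Real.Gamma (n / 2 + 1) = n / 2 * ((n / 2 - 1) * Real.Gamma (n / 2 - 1)) := by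
    rw [Real.Gamma_add_one (by positivity), ← Real.Gamma_add_one hpos.ne', sub_add_cancel]
  have hne : (n : ℝ) - 2 ≠ 0 := by linarith
  rw [sphereArea_eq (by lia), hrec]
  generalize Real.Gamma ((n : ℝ) / 2 - 1) = g at hΓ ⊢
  field_simp
  norm_num

theorem integral_quadForm_inv_cpow_mul_ellipticOp (hn : 2 < n) (hA : IsElliptic A)
    {φ : EuclideanSpace ℝ (Fin n) → ℂ} (hφ : ContDiff ℝ 2 φ) (hsupp : HasCompactSupport φ) :
    Complex.Gamma (n / 2 - 1) *
        ∫ x, quadForm (symmPart A)⁻¹ x ^ (-((n : ℂ) / 2 - 1)) * ellipticOp A φ x =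
      -4 * (φ 0 * ∫ x, Complex.exp (-quadForm (symmPart A)⁻¹ x)) := by
  have hq := (hA.symmPart.inv (symmPart_isSymm A)).isPosHomogeneous
  have hre : ((n : ℂ) / 2 - 1).re = n / 2 - 1 := by simp
  have hn' : (2 : ℝ) < n := mod_cast hn
  have hmellin := mellin_gaussianIntegral_of_forall_eq (μ := volume) hq hφ.continuous hsupp
    (continuous_ellipticOp A hφ) (hasCompactSupport_ellipticOp A hsupp)
    (by rwa [finrank_euclideanSpace_fin]) fun t _ => by
      rw [finrank_euclideanSpace_fin, gaussianIntegral_ellipticOp hA hφ hsupp]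
  rw [finrank_euclideanSpace_fin] at hmellin
  rw [← hmellin, mellin_gaussianIntegral hq (continuous_ellipticOp A hφ)
    (hasCompactSupport_ellipticOp A hsupp)]
  · rw [hre]
    linarith
  · rw [hre, finrank_euclideanSpace_fin]
    linarith

theorem integral_fundamentalSolution_mul_ellipticOp (hn : 2 < n) (hA : IsElliptic A) {d : ℂ}
    (hd : d ≠ 0) (hdint : ∫ x, Complex.exp (-quadForm (symmPart A)⁻¹ x) = (√π : ℂ) ^ n * d)
    {φ : EuclideanSpace ℝ (Fin n) → ℂ} (hφ : ContDiff ℝ 2 φ) (hsupp : HasCompactSupport φ) :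
    ∫ x, (-(((n : ℂ) - 2) * sphereArea n * d)⁻¹ *
      quadForm (symmPart A)⁻¹ x ^ ((2 - (n : ℂ)) / 2)) * ellipticOp A φ x = φ 0 := by
  have harea : ((n : ℂ) - 2) * sphereArea n * Complex.Gamma (n / 2 - 1) = 4 * (√π : ℂ) ^ n := by
    have hreal := congr_arg Complex.ofReal (sub_two_mul_sphereArea_mul_Gamma hn)
    push_cast [← Complex.Gamma_ofReal] at hreal
    exact hreal
  have hprod : ((n : ℂ) - 2) * sphereArea n * Complex.Gamma (n / 2 - 1) ≠ 0 := by
    rw [harea]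
    exact mul_ne_zero (by norm_num)
      (pow_ne_zero n (Complex.ofReal_ne_zero.mpr (Real.sqrt_pos.mpr pi_pos).ne'))
  have hpairing := integral_quadForm_inv_cpow_mul_ellipticOp hn hA hφ hsupp
  rw [hdint] at hpairing
  have hexponent : (2 - (n : ℂ)) / 2 = -((n : ℂ) / 2 - 1) := by ring
  simp only [mul_assoc (-(((n : ℂ) - 2) * sphereArea n * d)⁻¹)]
  rw [integral_const_mul, hexponent, neg_mul, neg_eq_iff_eq_neg,
    inv_mul_eq_iff_eq_mul₀ (mul_ne_zero (left_ne_zero_of_mul hprod) hd)]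
  refine mul_left_cancel₀ (right_ne_zero_of_mul hprod) ?_
  linear_combination hpairing + φ 0 * d * harea

theorem statement7_general (hn : 3 ≤ n) (hA : IsElliptic A) :
    IsUnit (symmPart A) ∧ IsElliptic (symmPart A)⁻¹ ∧
    ∃ d : ℂ, d ^ 2 = (symmPart A).det ∧
      ∀ φ : EuclideanSpace ℝ (Fin n) → ℂ, ContDiff ℝ 2 φ → HasCompactSupport φ →
        ∫ x, (-(((n : ℂ) - 2) * sphereArea n * d)⁻¹ *
          quadForm (symmPart A)⁻¹ x ^ ((2 - (n : ℂ)) / 2)) * ellipticOp A φ x = φ 0 := by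
  have hsymm := symmPart_isSymm A
  have hunit := hA.symmPart.isUnit hsymm
  obtain ⟨d, hd, hdint⟩ := hA.symmPart.exists_sqrt_det_integral_cexp_neg_quadForm_inv hsymm
  have hd0 : d ≠ 0 := by
    rintro rfl
    exact ((Matrix.isUnit_iff_isUnit_det _).mp hunit).ne_zero (hd ▸ zero_pow two_ne_zero)
  rw [Fintype.card_fin] at hdint
  exact ⟨hunit, hA.symmPart.inv hsymm, d, hd, fun φ hφ hsupp =>
    integral_fundamentalSolution_mul_ellipticOp hn hA hd0 hdint hφ hsupp⟩

end FundamentalSolution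

/-- For `n ≥ 3` and a scalar elliptic operator `L = Σ a_{rs} ∂_r∂_s`
with complex coefficients, the symmetric part `A_sym` is invertible, the bilinear form
`⟨A_sym⁻¹ x, x⟩` takes values in the slit plane `ℂ∖(-∞,0]` on `ℝⁿ∖{0}`, and for a suitable
square root `d` of `det A_sym`, the function
`E(x) = -((n-2) ω_{n-1} d)⁻¹ ⟨A_sym⁻¹ x, x⟩^{(2-n)/2}` is a fundamental solution of `L`
with pole at the origin. -/
theorem statement7
    (n : ℕ) (hn : 3 ≤ n)
    (A : Matrix (Fin n) (Fin n) ℂ)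
    (hell : ∀ ξ : EuclideanSpace ℝ (Fin n), ξ ≠ 0 →
      0 < (∑ r, ∑ s, A r s * (ξ r : ℂ) * (ξ s : ℂ)).re)
    (Asym : Matrix (Fin n) (Fin n) ℂ) (hAsym : Asym = ((1 : ℂ) / 2) • (A + A.transpose)) :
    IsUnit Asym ∧
    (∀ x : EuclideanSpace ℝ (Fin n), x ≠ 0 →
      (∑ r, ∑ s, Asym⁻¹ r s * (x r : ℂ) * (x s : ℂ)) ∈ Complex.slitPlane) ∧
    (∃ d : ℂ, d ^ 2 = Asym.det ∧
      ∀ φ : EuclideanSpace ℝ (Fin n) → ℂ, ContDiff ℝ (⊤ : ℕ∞) φ → HasCompactSupport φ →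
        (∫ x : EuclideanSpace ℝ (Fin n),
            (-((((n : ℂ) - 2) * (sphereArea n : ℂ) * d)⁻¹) *
                (∑ r, ∑ s, Asym⁻¹ r s * (x r : ℂ) * (x s : ℂ)) ^ (((2 : ℂ) - (n : ℂ)) / 2))
              * (∑ r, ∑ s, A r s * pd r (pd s φ) x))
          = φ 0) := by
  subst hAsym
  obtain ⟨hunit, hinv, d, hd, hfund⟩ := statement7_general hn hell
  exact ⟨hunit, fun x hx => .inl (hinv x hx), d, hd, fun φ hφ hsupp =>
    hfund φ (hφ.of_le (WithTop.coe_le_coe.mpr le_top)) hsupp⟩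

end
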